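/- Let T be a bounded linear operator on a complex separable Banach space X. Assume that T has a perfectly spanning set of unimodular eigenvectors. Then S̄_T(HC(T)) is a dense G_δ subset of S̄_T(X); in particular, T admits an ergodic T-invariant Borel probability measure with full support. -/

import Mathlib

open MeasureTheory Filter Topology Set TopologicalSpace

noncomputable instance : MeasurableSpace Circle := borel Circle
instance : BorelSpace Circle := ⟨rfl⟩

/-- The normalized Haar (probability) measure on the unit circle `𝕋`. -/
noncomputable def haarCircle : Measure Circle :=
  Measure.haarMeasure (⊤ : PositiveCompacts Circle)

/-- `S_T(X)`: the family of Steinhaus measures for `T`. A Steinhaus measure is the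
distribution of `∑_{j∈J} χ_j x_j` where `(x_j)_{j∈J}` is a finite family of unimodular
eigenvectors of `T` and the `χ_j` are independent random variables uniformly
distributed on `𝕋`; equivalently, it is the pushforward of the Haar probability
measure on `𝕋^J` under `(λ_j) ↦ ∑_j λ_j • x_j`. -/
def SteinhausFamily {X : Type*} [NormedAddCommGroup X] [NormedSpace ℂ X] [MeasurableSpace X]
    (T : X → X) : Set (ProbabilityMeasure X) :=
  {μ | ∃ (k : ℕ) (x : Fin k → X) (l : Fin k → ℂ),
    (∀ j, x j ≠ 0 ∧ ‖l j‖ = 1 ∧ T (x j) = l j • x j) ∧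
    (↑μ : Measure X) =
      Measure.map (fun z : Fin k → Circle => ∑ j, (z j : ℂ) • x j)
        (Measure.pi fun _ => haarCircle)}

/-!
Perfect spanning and second countability give a sequence of eigenvalues `l` that is independent in
the torus `𝕋^ℕ` and clusters so much at suitable vectors that these span a dense subspace; finitely
many terms of `l` may be prescribed. Independence holds because, for `g` in a compact metrizable
group, all but countably many `μ ∈ 𝕋` have the property that the powers of `(g, μ)` accumulate on
all of `1 × 𝕋`.

The random vectors on `𝕋^ℕ` that are `L¹`-limits of sums `z ↦ ∑ j, z j • x j` with `T x j = l j x j`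
form a closed subspace of `L¹`, on which `T` acts as translation by `l`, an ergodic rotation when no
term of `l` is prescribed. Any Steinhaus measure is the law of such a random vector for a suitable
choice of the prescribed terms. By Baire it suffices that, for every nonempty open `V`, the random
vectors almost all of whose values have an orbit visiting `V` are dense. For this one adds to a sum
a small sum in later coordinates, which takes values close to every point of a prescribed compact
set: the average of many independent copies of one eigenvector is small in the mean, but not
everywhere. The rotation by `l` then moves each point of the torus to where the perturbed sum is in
`V`.
-/

lemma exists_pow_eq_one_of_isClosed_of_ne_top {F : Subgroup Circle}
    (hF : IsClosed (F : Set Circle)) (hne : F ≠ ⊤) : ∃ q : ℕ, 0 < q ∧ ∀ z ∈ F, z ^ q = 1 := by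
  have : Fact (0 < 2 * Real.pi) := ⟨Real.two_pi_pos⟩
  let φ : AddCircle (2 * Real.pi) →+ Additive Circle := AddCircle.toCircle_addChar.toAddMonoidHom
  have hφ : Function.Surjective φ := fun z =>
    ((AddCircle.homeomorphCircle Real.two_pi_pos.ne').surjective z).imp fun a ha => by
      rwa [AddCircle.homeomorphCircle_apply] at ha
  have hnd : ¬ Dense (F.toAddSubgroup.comap φ : Set (AddCircle (2 * Real.pi))) := by
    intro hd
    have huniv := (hF.preimage AddCircle.continuous_toCircle).closure_eq.symm.trans hd.closure_eq
    refine hne ((Subgroup.eq_top_iff' F).2 fun z => ?_)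
    obtain ⟨a, rfl⟩ := hφ z
    exact huniv.ge (mem_univ a)
  simp only [AddCircle.dense_addSubgroup_iff_ne_zmultiples, not_forall, not_not] at hnd
  obtain ⟨a, ha, hFa⟩ := hnd
  refine ⟨addOrderOf a, Nat.pos_of_ne_zero ha, fun z hz => ?_⟩
  obtain ⟨b, rfl⟩ := hφ z
  obtain ⟨n, rfl⟩ := AddSubgroup.mem_zmultiples_iff.1 (hFa.le hz)
  have hzero : addOrderOf a • n • a = 0 := by rw [smul_comm, addOrderOf_nsmul_eq_zero, smul_zero]
  exact (map_nsmul φ _ _).symm.trans ((congrArg φ hzero).trans (map_zero φ))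

lemma countable_setOf_pow_eq {q : ℕ} (hq : 0 < q) (ν : Circle) :
    {μ : Circle | μ ^ q = ν}.Countable := by
  have hroots : {x : ℂ | x ^ q = ν}.Countable :=
    ((Polynomial.nthRoots q (ν : ℂ)).toFinset.countable_toSet).mono fun x hx => by
      simpa [Polynomial.mem_nthRoots hq] using hx
  refine (hroots.preimage Circle.coe_injective).mono fun μ hμ => ?_
  exact (Circle.coe_pow μ q).symm.trans (congrArg _ hμ)

lemma countable_pontryaginDual {G : Type*} [CommGroup G] [TopologicalSpace G]
    [IsTopologicalGroup G] [CompactSpace G] [SecondCountableTopology G] :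
    Countable (PontryaginDual G) := by
  have : SecondCountableTopology (PontryaginDual G) :=
    (ContinuousMonoidHom.isInducing_toContinuousMap G Circle).secondCountableTopology
  exact countable_of_Lindelof_of_discrete

lemma exists_continuousMonoidHom_comp_eq {G H M : Type*} [Group G] [TopologicalSpace G] [T2Space G]
    [Group H] [TopologicalSpace H] [CompactSpace H] [Group M] [TopologicalSpace M]
    {f : H →ₜ* G} (hf : Function.Surjective f) {φ : H →ₜ* M}
    (hφ : f.toMonoidHom.ker ≤ φ.toMonoidHom.ker) : ∃ χ : G →ₜ* M, ∀ h, χ (f h) = φ h := by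
  let χ := f.toMonoidHom.liftOfSurjective hf ⟨φ.toMonoidHom, hφ⟩
  have hχ : ∀ h, χ (f h) = φ h :=
    f.toMonoidHom.liftOfRightInverse_comp_apply _ _ ⟨φ.toMonoidHom, hφ⟩
  refine ⟨⟨χ, ?_⟩, hχ⟩
  refine (IsQuotientMap.of_surjective_continuous hf f.continuous_toFun).continuous_iff.2 ?_
  exact φ.continuous_toFun.congr fun h => (hχ h).symm

lemma image_topologicalClosure_zpowers {G M : Type*} [Group G] [TopologicalSpace G]
    [IsTopologicalGroup G] [CompactSpace G] [Group M] [TopologicalSpace M] [IsTopologicalGroup M]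
    [T2Space M] (f : G →ₜ* M) (g : G) :
    f '' (Subgroup.zpowers g).topologicalClosure = (Subgroup.zpowers (f g)).topologicalClosure := by
  refine (f.continuous_toFun.isClosedMap.closure_image_eq_of_continuous
    f.continuous_toFun _).symm.trans ?_
  exact congrArg closure (congrArg SetLike.coe (f.toMonoidHom.map_zpowers g))

section Dependence

variable {G : Type*} [CommGroup G] [TopologicalSpace G] [IsTopologicalGroup G] [CompactSpace G]
  [T2Space G]

lemma exists_character_eq_pow {g : G} {μ : Circle} {q : ℕ}
    (h : ∀ z : Circle, ((1 : G), z) ∈ (Subgroup.zpowers (g, μ)).topologicalClosure → z ^ q = 1) :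
    ∃ χ : PontryaginDual (Subgroup.zpowers g).topologicalClosure,
      χ ⟨g, subset_closure (Subgroup.mem_zpowers g)⟩ = μ ^ q := by
  set H := (Subgroup.zpowers (g, μ)).topologicalClosure
  set K := (Subgroup.zpowers g).topologicalClosure
  have : CompactSpace H := isCompact_iff_compactSpace.1 isClosed_closure.isCompact
  have himage : Prod.fst '' (H : Set (G × Circle)) = K :=
    image_topologicalClosure_zpowers (ContinuousMonoidHom.fst G Circle) (g, μ)
  let f : H →ₜ* K :=
    { toMonoidHom := ((MonoidHom.fst G Circle).comp H.subtype).codRestrict K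
        fun w => himage.le (mem_image_of_mem _ w.2)
      continuous_toFun := (continuous_fst.comp continuous_subtype_val).subtype_mk _ }
  let φ : H →ₜ* Circle :=
    { toMonoidHom := (powMonoidHom q).comp ((MonoidHom.snd G Circle).comp H.subtype)
      continuous_toFun := (continuous_snd.comp continuous_subtype_val).pow q }
  have hf : Function.Surjective f := fun w => by
    obtain ⟨v, hv, hvw⟩ := himage.ge w.2
    exact ⟨⟨v, hv⟩, Subtype.ext hvw⟩
  have hφ : f.toMonoidHom.ker ≤ φ.toMonoidHom.ker := by
    rintro ⟨⟨v, z⟩, hvz⟩ hker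
    obtain rfl : v = 1 := congrArg Subtype.val hker
    exact h z hvz
  obtain ⟨χ, hχ⟩ := exists_continuousMonoidHom_comp_eq hf hφ
  exact ⟨χ, hχ ⟨(g, μ), subset_closure (Subgroup.mem_zpowers _)⟩⟩

/- Unless the closure of the powers of `(g, μ)` contains `1 × 𝕋`, some power of `μ` is the value at
`g` of one of the countably many characters of the closure of the powers of `g`. -/
lemma countable_setOf_not_forall_one_mk_mem [SecondCountableTopology G] (g : G) :
    {μ : Circle | ¬ ∀ z : Circle,
      ((1 : G), z) ∈ (Subgroup.zpowers (g, μ)).topologicalClosure}.Countable := by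
  have : CompactSpace (Subgroup.zpowers g).topologicalClosure :=
    isCompact_iff_compactSpace.1 isClosed_closure.isCompact
  have : SecondCountableTopology (Subgroup.zpowers g).topologicalClosure :=
    Subtype.secondCountableTopology _
  have := countable_pontryaginDual (G := (Subgroup.zpowers g).topologicalClosure)
  refine (countable_iUnion fun q : {q : ℕ // 0 < q} =>
    countable_iUnion fun χ : PontryaginDual (Subgroup.zpowers g).topologicalClosure =>
      countable_setOf_pow_eq q.2 (χ ⟨g, subset_closure (Subgroup.mem_zpowers g)⟩)).mono
    fun μ hμ => ?_
  let F := (Subgroup.zpowers (g, μ)).topologicalClosure.comap (MonoidHom.inr G Circle)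
  have hF : IsClosed (F : Set Circle) :=
    isClosed_closure.preimage (continuous_const.prodMk continuous_id)
  obtain ⟨q, hq, hFq⟩ := exists_pow_eq_one_of_isClosed_of_ne_top hF
    fun htop => hμ fun z => htop.ge (Subgroup.mem_top z)
  obtain ⟨χ, hχ⟩ := exists_character_eq_pow hFq
  exact mem_iUnion₂.2 ⟨⟨q, hq⟩, χ, hχ.symm⟩

end Dependence

lemma exists_seq_of_forall_exists {α : Type*} {P : ∀ n, (Fin n → α) → α → Prop}
    (h : ∀ n a, ∃ b, P n a b) : ∃ l : ℕ → α, ∀ n, P n (fun i => l i) (l n) := by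
  choose next hnext using h
  let l : ℕ → α := fun n => Nat.strongRecOn n fun n prev => next n fun i => prev i i.2
  refine ⟨l, fun n => ?_⟩
  have hl : l n = next n fun i => l i := Nat.strongRecOn_eq _ n
  rw [hl]
  exact hnext n _

/-- The coordinates `l j`, `j ≥ k`, are independent of each other and of the earlier ones: the
closed subgroup of the torus generated by `l` contains all points whose first `k` coordinates are
trivial. -/
def IsIndependentFrom (k : ℕ) (l : ℕ → Circle) : Prop :=
  ∀ z : ℕ → Circle, (∀ j < k, z j = 1) → z ∈ (Subgroup.zpowers l).topologicalClosure

namespace IsIndependentFrom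

variable {k : ℕ} {l : ℕ → Circle}

lemma mem_closure_range_pow (hl : IsIndependentFrom k l) {z : ℕ → Circle}
    (hz : ∀ j < k, z j = 1) : z ∈ closure (range fun n : ℕ => l ^ n) := by
  rw [← closure_range_zpow_eq_pow]
  exact hl z hz

lemma denseRange_pow (hl : IsIndependentFrom 0 l) : DenseRange fun n : ℕ => l ^ n :=
  fun _ => hl.mem_closure_range_pow fun j hj => absurd hj j.not_lt_zero

/- The projection of the closed subgroup generated by `l` to finitely many coordinates is the closed
subgroup generated by the projection of `l`. -/
lemma of_forall_one_mk_mem (h : ∀ n, k ≤ n → ∀ w : Circle, ((1 : Fin n → Circle), w) ∈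
    (Subgroup.zpowers (fun i : Fin n => l i, l n)).topologicalClosure) :
    IsIndependentFrom k l := by
  intro z hz
  have hlift : ∀ n, k ≤ n → ∀ w : Circle, ∃ u ∈ (Subgroup.zpowers l).topologicalClosure,
      (∀ i < n, u i = 1) ∧ u n = w := by
    intro n hn w
    let π : (ℕ → Circle) →ₜ* (Fin n → Circle) × Circle :=
      { toFun := fun u => (fun i => u i, u n)
        map_one' := rfl
        map_mul' := fun _ _ => rfl
        continuous_toFun := by fun_prop }
    obtain ⟨u, hu, huw⟩ := (image_topologicalClosure_zpowers π l).ge (h n hn w)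
    obtain ⟨hu_one, hu_n⟩ := Prod.mk.inj huw
    exact ⟨u, hu, fun i hi => congrFun hu_one ⟨i, hi⟩, hu_n⟩
  have happrox : ∀ n, k ≤ n → ∃ u ∈ (Subgroup.zpowers l).topologicalClosure,
      ∀ i < n, u i = z i := by
    intro n hn
    induction n, hn using Nat.le_induction with
    | base => exact ⟨1, one_mem _, fun i hi => (hz i hi).symm⟩
    | succ n hn ih =>
      obtain ⟨u, hu, huz⟩ := ih
      obtain ⟨v, hv, hv_one, hv_n⟩ := hlift n hn (z n / u n)
      refine ⟨u * v, mul_mem hu hv, fun i hi => ?_⟩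
      rcases (Nat.lt_succ_iff.1 hi).lt_or_eq with hi | rfl
      · simp [huz i hi, hv_one i hi]
      · simp [hv_n]
  choose! u hu huz using happrox
  refine isClosed_closure.mem_of_tendsto (f := u) (b := atTop) (tendsto_pi_nhds.2 fun i => ?_)
    (eventually_ge_atTop k |>.mono hu)
  refine tendsto_const_nhds.congr' ?_
  filter_upwards [eventually_ge_atTop k, eventually_gt_atTop i] with n hkn hin
  exact (huz n hkn i hin).symm

end IsIndependentFrom

lemma exists_isIndependentFrom (k : ℕ) (l₀ : ℕ → Circle) {Λ : ℕ → Set Circle}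
    (hΛ : ∀ n, ¬ (Λ n).Countable) :
    ∃ l : ℕ → Circle, (∀ j < k, l j = l₀ j) ∧ (∀ j, k ≤ j → l j ∈ Λ j) ∧
      IsIndependentFrom k l := by
  let P : ∀ n, (Fin n → Circle) → Circle → Prop := fun n a b =>
    (n < k → b = l₀ n) ∧ (k ≤ n → b ∈ Λ n ∧ ∀ w : Circle,
      ((1 : Fin n → Circle), w) ∈ (Subgroup.zpowers (a, b)).topologicalClosure)
  have hP : ∀ n a, ∃ b, P n a b := by
    intro n a
    rcases lt_or_ge n k with hn | hn
    · exact ⟨l₀ n, fun _ => rfl, fun h => absurd hn h.not_gt⟩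
    · obtain ⟨b, hb, hdep⟩ := not_subset.1 fun hsub =>
        hΛ n ((countable_setOf_not_forall_one_mk_mem a).mono hsub)
      exact ⟨b, fun h => absurd hn h.not_ge, fun _ => ⟨hb, not_not.1 hdep⟩⟩
  obtain ⟨l, hl⟩ := exists_seq_of_forall_exists hP
  exact ⟨l, fun j hj => (hl j).1 hj, fun j hj => ((hl j).2 hj).1,
    .of_forall_one_mk_mem fun n hn => ((hl n).2 hn).2⟩

lemma not_countable_univ_circle : ¬ (univ : Set Circle).Countable := fun h => by
  have hIoc : (Ioc (-Real.pi) Real.pi).Countable :=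
    have := countable_univ_iff.1 h
    Circle.argEquiv.symm.injective.countable.to_set
  linarith [Cardinal.Real.Ioc_countable_iff.1 hIoc, Real.pi_pos]

section Eigenvectors

variable {X : Type*} [NormedAddCommGroup X] [NormedSpace ℂ X]

/-- `T` has a perfectly spanning set of unimodular eigenvectors. -/
def HasPerfectSpanningEigenvectors (T : X →L[ℂ] X) : Prop :=
  ∀ D : Set ℂ, D.Countable →
    Dense (Submodule.span ℂ {x : X | ∃ l : ℂ, ‖l‖ = 1 ∧ l ∉ D ∧ T x = l • x} : Set X)

/-- The unimodular `μ` such that `T f = μ • f` for some `f ∈ U`; the vector `f = 0` is allowed. -/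
def eigenvaluesIn (T : X →L[ℂ] X) (U : Set X) : Set Circle :=
  {μ | ∃ f ∈ U, T f = (μ : ℂ) • f}

lemma eigenvaluesIn_mono (T : X →L[ℂ] X) {U V : Set X} (h : U ⊆ V) :
    eigenvaluesIn T U ⊆ eigenvaluesIn T V :=
  fun _ ⟨f, hf, hTf⟩ => ⟨f, h hf, hTf⟩

/-- The vectors approximable by eigenvectors for uncountably many unimodular eigenvalues. -/
def perfectVectors (T : X →L[ℂ] X) : Set X :=
  {e | ∀ U ∈ 𝓝 e, ¬ (eigenvaluesIn T U).Countable}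

/-- The vectors approximable by eigenvectors for infinitely many terms of the sequence `l`. -/
def clusterVectors (T : X →L[ℂ] X) (l : ℕ → Circle) : Set X :=
  {e | ∀ U ∈ 𝓝 e, {j | l j ∈ eigenvaluesIn T U}.Infinite}

lemma zero_mem_perfectVectors (T : X →L[ℂ] X) : 0 ∈ perfectVectors T := fun U hU h =>
  not_countable_univ_circle <|
    h.mono fun μ _ => show μ ∈ eigenvaluesIn T U from ⟨0, mem_of_mem_nhds hU, by simp⟩

lemma HasPerfectSpanningEigenvectors.dense_span_perfectVectors [SecondCountableTopology X]
    {T : X →L[ℂ] X} (hT : HasPerfectSpanningEigenvectors T) :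
    Dense (Submodule.span ℂ (perfectVectors T) : Set X) := by
  let D : Set ℂ := ⋃ b ∈ {b ∈ countableBasis X | (eigenvaluesIn T b).Countable},
    (fun μ : Circle => (μ : ℂ)) '' eigenvaluesIn T b
  have hD : D.Countable := ((countable_countableBasis X).mono (sep_subset _ _)).biUnion
    fun b hb => hb.2.image _
  refine (hT D hD).mono (Submodule.span_mono ?_)
  rintro x ⟨l, hl, hlD, hx⟩ U hU hcount
  obtain ⟨b, hb, hxb, hbU⟩ := (isBasis_countableBasis X).mem_nhds_iff.1 hU
  obtain ⟨μ, rfl⟩ : ∃ μ : Circle, (μ : ℂ) = l := ⟨⟨l, mem_sphere_zero_iff_norm.2 hl⟩, rfl⟩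
  exact hlD (mem_biUnion (show b ∈ {b ∈ countableBasis X | (eigenvaluesIn T b).Countable} from
    ⟨hb, hcount.mono (eigenvaluesIn_mono T hbU)⟩) ⟨μ, ⟨x, hxb, hx⟩, rfl⟩)

lemma HasPerfectSpanningEigenvectors.exists_isIndependentFrom_dense_span
    [SecondCountableTopology X] {T : X →L[ℂ] X} (hT : HasPerfectSpanningEigenvectors T) (k : ℕ)
    (l₀ : ℕ → Circle) : ∃ l : ℕ → Circle, (∀ j < k, l j = l₀ j) ∧ IsIndependentFrom k l ∧
      Dense (Submodule.span ℂ (clusterVectors T l) : Set X) := by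
  let B : Set (Set X) := {b ∈ countableBasis X | ¬ (eigenvaluesIn T b).Countable}
  have hB_mem : ∀ e ∈ perfectVectors T, ∀ U ∈ 𝓝 e, ∃ b ∈ B, b ⊆ U := fun e he U hU => by
    obtain ⟨b, hb, heb, hbU⟩ := (isBasis_countableBasis X).mem_nhds_iff.1 hU
    exact ⟨b, ⟨hb, he b ((isOpen_of_mem_countableBasis hb).mem_nhds heb)⟩, hbU⟩
  have hB_nonempty : B.Nonempty :=
    (hB_mem 0 (zero_mem_perfectVectors T) univ univ_mem).imp fun b hb => hb.1
  obtain ⟨b, hb⟩ := ((countable_countableBasis X).mono (sep_subset _ _)).exists_eq_range hB_nonempty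
  have hbB : ∀ i, b i ∈ B := fun i => hb.ge (mem_range_self i)
  obtain ⟨l, hl₀, hlΛ, hl⟩ :=
    exists_isIndependentFrom k l₀ fun n => (hbB (Nat.unpair n).1).2
  refine ⟨l, hl₀, hl, hT.dense_span_perfectVectors.mono (Submodule.span_mono fun e he U hU => ?_)⟩
  obtain ⟨_, hbi, hbU⟩ := hB_mem e he U hU
  obtain ⟨i, rfl⟩ := hb.le hbi
  refine infinite_of_injective_forall_mem (f := fun n => Nat.pair i (n + k)) (fun n n' h => ?_)
    fun n => eigenvaluesIn_mono T hbU ?_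
  · exact Nat.add_right_cancel (Nat.pair_eq_pair.1 h).2
  · simpa only [Nat.unpair_pair] using
      hlΛ (Nat.pair i (n + k)) ((Nat.le_add_left k n).trans (Nat.right_le_pair _ _))

end Eigenvectors

section TorusHaar

/-- The normalized Haar measure on the torus `𝕋^ℕ`. -/
noncomputable def torusHaar : Measure (ℕ → Circle) := Measure.haarMeasure ⊤

instance : IsProbabilityMeasure torusHaar :=
  ⟨by simpa [torusHaar] using Measure.haarMeasure_self (K₀ := (⊤ : PositiveCompacts (ℕ → Circle)))⟩

instance : torusHaar.IsHaarMeasure := inferInstanceAs (Measure.haarMeasure _).IsHaarMeasure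

instance : torusHaar.Regular := inferInstanceAs (Measure.haarMeasure _).Regular

instance : IsProbabilityMeasure haarCircle :=
  ⟨by simpa [haarCircle] using Measure.haarMeasure_self (K₀ := (⊤ : PositiveCompacts Circle))⟩

instance : haarCircle.IsHaarMeasure := inferInstanceAs (Measure.haarMeasure _).IsHaarMeasure

lemma integrable_torusHaar {E : Type*} [NormedAddCommGroup E] {f : (ℕ → Circle) → E}
    (hf : Continuous f) : Integrable f torusHaar :=
  hf.integrable_of_hasCompactSupport (.of_compactSpace f)

lemma measurePreserving_comp_torusHaar {k : ℕ} {σ : Fin k → ℕ} (hσ : Function.Injective σ) :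
    MeasurePreserving (fun z : ℕ → Circle => z ∘ σ) torusHaar (Measure.pi fun _ => haarCircle) := by
  let f : (ℕ → Circle) →* (Fin k → Circle) :=
    { toFun := fun z => z ∘ σ
      map_one' := rfl
      map_mul' := fun _ _ => rfl }
  exact f.measurePreserving (continuous_pi fun i => continuous_apply (σ i))
    hσ.surjective_comp_right (by simp)

lemma integral_coord_mul_conj_coord (i j : ℕ) :
    ∫ z : ℕ → Circle, (z i : ℂ) * starRingEnd ℂ (z j) ∂torusHaar = if i = j then 1 else 0 := by
  split_ifs with h
  · simp [h, Complex.mul_conj, Circle.normSq_coe]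
  · have hinv := integral_mul_left_eq_self (μ := torusHaar)
      (fun z => (z i : ℂ) * starRingEnd ℂ (z j)) (Pi.mulSingle i (-1))
    simp only [Pi.mul_apply, Pi.mulSingle_eq_same, Pi.mulSingle_eq_of_ne' h, one_mul,
      Circle.coe_neg, neg_mul, integral_neg] at hinv
    exact self_eq_neg.1 hinv.symm

lemma integral_norm_sum_coord_sq (S : Finset ℕ) :
    ∫ z : ℕ → Circle, ‖∑ i ∈ S, (z i : ℂ)‖ ^ 2 ∂torusHaar = S.card := by
  have hcont : ∀ i j : ℕ, Continuous fun z : ℕ → Circle => (z i : ℂ) * starRingEnd ℂ (z j) :=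
    fun i j => by fun_prop
  have hexpand : ∀ z : ℕ → Circle, ((‖∑ i ∈ S, (z i : ℂ)‖ ^ 2 : ℝ) : ℂ) =
      ∑ i ∈ S, ∑ j ∈ S, (z i : ℂ) * starRingEnd ℂ (z j) := fun z => by
    rw [← Finset.sum_mul_sum, ← map_sum, Complex.mul_conj, Complex.normSq_eq_norm_sq]
  apply Complex.ofReal_injective
  calc ((∫ z : ℕ → Circle, ‖∑ i ∈ S, (z i : ℂ)‖ ^ 2 ∂torusHaar : ℝ) : ℂ)
      = ∫ z : ℕ → Circle, ∑ i ∈ S, ∑ j ∈ S, (z i : ℂ) * starRingEnd ℂ (z j) ∂torusHaar := by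
        rw [← integral_complex_ofReal]
        simp only [hexpand]
    _ = ∑ i ∈ S, ∑ j ∈ S, ∫ z : ℕ → Circle, (z i : ℂ) * starRingEnd ℂ (z j) ∂torusHaar := by
        rw [integral_finsetSum _ fun i _ => integrable_torusHaar (by fun_prop)]
        exact Finset.sum_congr rfl fun i _ =>
          integral_finsetSum _ fun j _ => integrable_torusHaar (hcont i j)
    _ = ((S.card : ℝ) : ℂ) := by simp [integral_coord_mul_conj_coord]

lemma integral_norm_sum_coord_le (S : Finset ℕ) :
    ∫ z : ℕ → Circle, ‖∑ i ∈ S, (z i : ℂ)‖ ∂torusHaar ≤ √S.card := by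
  have hmem : MemLp (fun z : ℕ → Circle => ‖∑ i ∈ S, (z i : ℂ)‖) 2 torusHaar :=
    Continuous.memLp_of_hasCompactSupport (by fun_prop) (.of_compactSpace _)
  have hvar := (ProbabilityTheory.variance_nonneg _ _).trans_eq
    (ProbabilityTheory.variance_eq_sub hmem)
  rw [← integral_norm_sum_coord_sq]
  exact Real.le_sqrt_of_sq_le (sub_nonneg.1 hvar)

end TorusHaar

lemma exists_forall_ge_eq_zero {X : Type*} [Zero X] (x : ℕ →₀ X) (m : ℕ) :
    ∃ M, m ≤ M ∧ ∀ j, M ≤ j → x j = 0 := by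
  obtain ⟨M, hM⟩ := x.support.exists_nat_subset_range
  refine ⟨max m M, le_max_left m M, fun j hj => Finsupp.notMem_support_iff.1 fun hjx => ?_⟩
  exact (Finset.mem_range.1 (hM hjx)).not_ge ((le_max_right m M).trans hj)

section RandomSum

variable {X : Type*} [NormedAddCommGroup X] [NormedSpace ℂ X]

/-- The vector-valued trigonometric polynomial `z ↦ ∑ j, z j • x j` on the torus `𝕋^ℕ`, for
finitely supported coefficients `x`. Under `torusHaar` it is a sum of independent variables. -/
noncomputable def randomSum : (ℕ →₀ X) →ₗ[ℂ] C(ℕ → Circle, X) :=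
  Finsupp.lsum ℂ fun j =>
    { toFun := fun v => ⟨fun z => (z j : ℂ) • v, by fun_prop⟩
      map_add' := fun v w => by ext z; exact smul_add _ v w
      map_smul' := fun c v => by ext z; exact smul_comm _ c v }

lemma randomSum_apply (x : ℕ →₀ X) (z : ℕ → Circle) :
    randomSum x z = x.sum fun j v => (z j : ℂ) • v := by
  rw [randomSum, Finsupp.lsum_apply, Finsupp.sum, Finsupp.sum, ContinuousMap.sum_apply]
  rfl

lemma randomSum_single (j : ℕ) (v : X) (z : ℕ → Circle) :
    randomSum (Finsupp.single j v) z = (z j : ℂ) • v := by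
  simp [randomSum_apply]

lemma randomSum_congr {x : ℕ →₀ X} {z w : ℕ → Circle} (h : ∀ j, x j ≠ 0 → z j = w j) :
    randomSum x z = randomSum x w := by
  simp only [randomSum_apply]
  exact Finsupp.sum_congr fun j hj => by rw [h j (Finsupp.mem_support_iff.1 hj)]

lemma exists_glue {m : ℕ} {x y : ℕ →₀ X} (hx : ∀ j, m ≤ j → x j = 0) (hy : ∀ j < m, y j = 0)
    (s s' : ℕ → Circle) : ∃ t : ℕ → Circle, (∀ j < m, t j = s j) ∧
      randomSum x t = randomSum x s ∧ randomSum y t = randomSum y s' := by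
  refine ⟨fun j => if j < m then s j else s' j, fun j hj => if_pos hj,
    randomSum_congr fun j hj => if_pos ?_, randomSum_congr fun j hj => if_neg ?_⟩
  · exact not_le.1 (mt (hx j) hj)
  · exact mt (hy j) hj

/-- The finitely supported families whose `j`-th member is zero or an eigenvector of `T` for the
eigenvalue `l j`. -/
def eigenfamilies (T : X →L[ℂ] X) (l : ℕ → Circle) : Submodule ℂ (ℕ →₀ X) :=
  Finsupp.submodule fun j => Module.End.eigenspace (T : X →ₗ[ℂ] X) (l j)

variable {T : X →L[ℂ] X} {l : ℕ → Circle}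

lemma mem_eigenfamilies {x : ℕ →₀ X} :
    x ∈ eigenfamilies T l ↔ ∀ j, T (x j) = (l j : ℂ) • x j := by
  simp [eigenfamilies, Finsupp.mem_submodule_iff]

lemma single_mem_eigenfamilies {j : ℕ} {v : X} (hv : T v = (l j : ℂ) • v) :
    Finsupp.single j v ∈ eigenfamilies T l := by
  refine mem_eigenfamilies.2 fun i => ?_
  rcases eq_or_ne j i with rfl | hij
  · simpa using hv
  · simp [Finsupp.single_eq_of_ne' hij]

lemma map_randomSum {x : ℕ →₀ X} (hx : x ∈ eigenfamilies T l) (z : ℕ → Circle) :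
    T (randomSum x z) = randomSum x (l * z) := by
  simp only [randomSum_apply, Finsupp.sum, map_sum, map_smul, mem_eigenfamilies.1 hx,
    Pi.mul_apply, Circle.coe_mul, smul_smul, mul_comm]

lemma iterate_randomSum {x : ℕ →₀ X} (hx : x ∈ eigenfamilies T l) (z : ℕ → Circle) (n : ℕ) :
    T^[n] (randomSum x z) = randomSum x (l ^ n * z) := by
  induction n with
  | zero => simp
  | succ n ih => rw [Function.iterate_succ_apply', ih, map_randomSum hx, pow_succ', mul_assoc]

end RandomSum

section Reachable

open scoped Pointwise

variable {X : Type*} [NormedAddCommGroup X] [NormedSpace ℂ X] {T : X →L[ℂ] X} {l : ℕ → Circle}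

/-- All points of `K` are attained, up to a uniform error, as values of one random sum of
eigenvectors which has arbitrarily late indices and arbitrarily small mean norm. -/
def IsReachable (T : X →L[ℂ] X) (l : ℕ → Circle) (K : Set X) : Prop :=
  ∀ (m : ℕ) (ε : ℝ), 0 < ε → ∃ y ∈ eigenfamilies T l, (∀ j < m, y j = 0) ∧
    ∫ z, ‖randomSum y z‖ ∂torusHaar ≤ ε ∧ ∀ u ∈ K, ∃ s, ‖randomSum y s - u‖ ≤ ε

lemma exists_sum_coord_eq_zero {S : Finset ℕ} {N : ℕ} (hS : S.card = 2 * N) :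
    ∃ s : ℕ → Circle, ∑ j ∈ S, (s j : ℂ) = 0 := by
  obtain ⟨A, hAS, hA⟩ := S.exists_subset_card_eq (hS.ge.trans' (Nat.le_mul_of_pos_left N two_pos))
  have hsign : ∀ j, ((if j ∈ A then 1 else -1 : Circle) : ℂ) = 2 * (if j ∈ A then 1 else 0) - 1 :=
    fun j => by split_ifs <;> norm_num
  refine ⟨fun j => if j ∈ A then 1 else -1, ?_⟩
  simp only [hsign, Finset.sum_sub_distrib, ← Finset.mul_sum, Finset.sum_ite_mem,
    Finset.inter_eq_right.2 hAS]
  simp [hA, hS]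

/-- The family `f` restricted to `S` and divided by the cardinality of `S`. -/
noncomputable def averageFamily (S : Finset ℕ) (f : ℕ → X) : ℕ →₀ X :=
  (S.card : ℂ)⁻¹ • ∑ j ∈ S, Finsupp.single j (f j)

lemma norm_randomSum_averageFamily_sub_le {S : Finset ℕ} (hS : S.Nonempty) {f : ℕ → X} {e : X}
    {δ : ℝ} (hf : ∀ j ∈ S, ‖f j - e‖ ≤ δ) (z : ℕ → Circle) :
    ‖randomSum (averageFamily S f) z - ((S.card : ℂ)⁻¹ * ∑ j ∈ S, (z j : ℂ)) • e‖ ≤ δ := by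
  have hcard : 0 < (S.card : ℝ) := Nat.cast_pos.2 hS.card_pos
  have hsub : randomSum (averageFamily S f) z - ((S.card : ℂ)⁻¹ * ∑ j ∈ S, (z j : ℂ)) • e =
      (S.card : ℂ)⁻¹ • ∑ j ∈ S, (z j : ℂ) • (f j - e) := by
    simp only [averageFamily, map_smul, map_sum, ContinuousMap.smul_apply, ContinuousMap.sum_apply,
      randomSum_single, mul_smul, Finset.sum_smul, smul_sub, Finset.sum_sub_distrib]
  calc _ = (S.card : ℝ)⁻¹ * ‖∑ j ∈ S, (z j : ℂ) • (f j - e)‖ := by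
        rw [hsub, norm_smul, norm_inv, Complex.norm_natCast]
    _ ≤ (S.card : ℝ)⁻¹ * (S.card • δ) := by
        gcongr
        refine norm_sum_le_of_le _ (fun j hj => ?_) |>.trans_eq (Finset.sum_const δ)
        rw [norm_smul, Circle.norm_coe, one_mul]
        exact hf j hj
    _ = δ := by rw [nsmul_eq_mul, inv_mul_cancel_left₀ hcard.ne']

lemma integral_norm_randomSum_averageFamily_le {S : Finset ℕ} (hS : S.Nonempty) {f : ℕ → X} {e : X}
    {δ : ℝ} (hf : ∀ j ∈ S, ‖f j - e‖ ≤ δ) :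
    ∫ z, ‖randomSum (averageFamily S f) z‖ ∂torusHaar ≤ ‖e‖ / √S.card + δ := by
  have hpoint : ∀ z : ℕ → Circle, ‖randomSum (averageFamily S f) z‖ ≤
      ‖e‖ / S.card * ‖∑ j ∈ S, (z j : ℂ)‖ + δ := fun z => by
    have h := norm_le_norm_add_norm_sub' (randomSum (averageFamily S f) z)
      (((S.card : ℂ)⁻¹ * ∑ j ∈ S, (z j : ℂ)) • e)
    rw [norm_smul, norm_mul, norm_inv, Complex.norm_natCast] at h
    calc _ ≤ _ := h.trans (add_le_add_right (norm_randomSum_averageFamily_sub_le hS hf z) _)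
      _ = _ := by ring
  calc ∫ z, ‖randomSum (averageFamily S f) z‖ ∂torusHaar
      ≤ ∫ z : ℕ → Circle, (‖e‖ / S.card * ‖∑ j ∈ S, (z j : ℂ)‖ + δ) ∂torusHaar :=
        integral_mono (integrable_torusHaar (by fun_prop)) (integrable_torusHaar (by fun_prop))
          hpoint
    _ = ‖e‖ / S.card * ∫ z : ℕ → Circle, ‖∑ j ∈ S, (z j : ℂ)‖ ∂torusHaar + δ := by
        rw [integral_add (integrable_torusHaar (by fun_prop)) (integrable_const δ),
          integral_const_mul, integral_const, probReal_univ, one_smul]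
    _ ≤ ‖e‖ / S.card * √S.card + δ := by
        gcongr
        exact integral_norm_sum_coord_le S
    _ = ‖e‖ / √S.card + δ := by
        rw [div_mul_eq_mul_div, mul_div_assoc, Real.sqrt_div_self', mul_one_div]

/- A short average of many independent copies of `e` has small mean norm, although it takes the
value `e`, when all coordinates agree, and the value `0`, when they cancel. -/
lemma isReachable_of_mem_clusterVectors {e : X} (he : e ∈ clusterVectors T l) :
    IsReachable T l {0, e} := by
  intro m ε hε
  obtain ⟨N, hN_pos, hN⟩ : ∃ N : ℕ, 0 < N ∧ ‖e‖ / √(2 * N : ℕ) ≤ ε / 2 := by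
    have hlim : Tendsto (fun N : ℕ => ‖e‖ / √(2 * N : ℕ)) atTop (𝓝 0) :=
      tendsto_const_nhds.div_atTop <| Real.tendsto_sqrt_atTop.comp <|
        tendsto_natCast_atTop_atTop.comp (tendsto_id.const_mul_atTop' two_pos)
    exact ((eventually_gt_atTop 0).and (hlim.eventually_le_const (half_pos hε))).exists
  obtain ⟨S, hSJ, hS⟩ := ((he _ (Metric.ball_mem_nhds e (half_pos hε))).sdiff
    (finite_Iio m)).exists_subset_card_eq (2 * N)
  have hS_nonempty : S.Nonempty := Finset.card_pos.1 (by omega)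
  choose! f hf_near hf using fun j (hj : j ∈ S) => (hSJ hj).1
  replace hf_near : ∀ j ∈ S, ‖f j - e‖ ≤ ε / 2 := fun j hj =>
    (mem_ball_iff_norm.1 (hf_near j hj)).le
  have hclose := norm_randomSum_averageFamily_sub_le hS_nonempty hf_near
  refine ⟨averageFamily S f, Submodule.smul_mem _ _ <| Submodule.sum_mem _ fun j hj =>
    single_mem_eigenfamilies (hf j hj), fun j hj => ?_, ?_, ?_⟩
  · have hjS : j ∉ S := fun hjS => (hSJ hjS).2 hj
    simp [averageFamily, Finsupp.single_apply, hjS]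
  · refine (integral_norm_randomSum_averageFamily_le hS_nonempty hf_near).trans ?_
    rw [hS]
    linarith
  · rintro u (rfl | rfl)
    · obtain ⟨s, hs⟩ := exists_sum_coord_eq_zero hS
      exact ⟨s, by simpa [hs] using (hclose s).trans (half_le_self hε.le)⟩
    · refine ⟨1, ?_⟩
      have hcard : (S.card : ℂ)⁻¹ * S.card = 1 :=
        inv_mul_cancel₀ (by simpa using hS_nonempty.ne_empty)
      simpa [hcard] using (hclose 1).trans (half_le_self hε.le)

namespace IsReachable

lemma of_forall_exists {K : Set X} (h : ∀ ε > 0, ∃ L, IsReachable T l L ∧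
    ∀ u ∈ K, ∃ v ∈ L, ‖v - u‖ ≤ ε) : IsReachable T l K := by
  intro m ε hε
  obtain ⟨L, hL, hKL⟩ := h (ε / 2) (half_pos hε)
  obtain ⟨y, hy, hy_zero, hy_mean, hy_reach⟩ := hL m (ε / 2) (half_pos hε)
  refine ⟨y, hy, hy_zero, hy_mean.trans (half_le_self hε.le), fun u hu => ?_⟩
  obtain ⟨v, hv, hvu⟩ := hKL u hu
  obtain ⟨s, hs⟩ := hy_reach v hv
  exact ⟨s, (norm_sub_le_norm_sub_add_norm_sub _ v u).trans (by linarith)⟩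

lemma mono {K L : Set X} (hL : IsReachable T l L) (hKL : K ⊆ L) : IsReachable T l K :=
  of_forall_exists fun _ hε => ⟨L, hL, fun u hu => ⟨u, hKL hu, by simpa using hε.le⟩⟩

lemma add {K L : Set X} (hK : IsReachable T l K) (hL : IsReachable T l L) :
    IsReachable T l (K + L) := by
  intro m ε hε
  obtain ⟨y, hy, hy_zero, hy_mean, hy_reach⟩ := hK m (ε / 2) (half_pos hε)
  obtain ⟨M, hmM, hy_tail⟩ := exists_forall_ge_eq_zero y m
  obtain ⟨y', hy', hy'_zero, hy'_mean, hy'_reach⟩ := hL M (ε / 2) (half_pos hε)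
  refine ⟨y + y', add_mem hy hy', fun j hj => ?_, ?_, ?_⟩
  · rw [Finsupp.add_apply, hy_zero j hj, hy'_zero j (hj.trans_le hmM), add_zero]
  · calc ∫ z, ‖randomSum (y + y') z‖ ∂torusHaar
        ≤ ∫ z, (‖randomSum y z‖ + ‖randomSum y' z‖) ∂torusHaar :=
          integral_mono (integrable_torusHaar (by fun_prop)) (integrable_torusHaar (by fun_prop))
            fun z => by rw [map_add]; exact norm_add_le _ _
      _ = ∫ z, ‖randomSum y z‖ ∂torusHaar + ∫ z, ‖randomSum y' z‖ ∂torusHaar :=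
          integral_add (integrable_torusHaar (by fun_prop)) (integrable_torusHaar (by fun_prop))
      _ ≤ ε := by linarith
  · rintro _ ⟨u, hu, u', hu', rfl⟩
    obtain ⟨s, hs⟩ := hy_reach u hu
    obtain ⟨s', hs'⟩ := hy'_reach u' hu'
    obtain ⟨t, -, ht, ht'⟩ := exists_glue hy_tail hy'_zero s s'
    refine ⟨t, ?_⟩
    rw [map_add, ContinuousMap.add_apply, ht, ht', add_sub_add_comm]
    exact (norm_add_le _ _).trans (by linarith)

lemma zero : IsReachable T l {0} := fun _ ε hε =>
  ⟨0, zero_mem _, fun _ _ => rfl, by simpa using hε.le, fun u hu => ⟨1, by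
    simpa [mem_singleton_iff.1 hu] using hε.le⟩⟩

end IsReachable

lemma smul_mem_clusterVectors {e : X} (he : e ∈ clusterVectors T l) (c : ℂ) :
    c • e ∈ clusterVectors T l := fun U hU => by
  refine (he _ ((continuous_const_smul c).continuousAt.preimage_mem_nhds hU)).mono ?_
  rintro j ⟨f, hf, hTf⟩
  exact ⟨c • f, hf, by rw [map_smul, hTf, smul_comm]⟩

lemma isReachable_zero_pair (hl : Dense (Submodule.span ℂ (clusterVectors T l) : Set X)) (u : X) :
    IsReachable T l {0, u} := by
  have hspan : ∀ v ∈ Submodule.span ℂ (clusterVectors T l), IsReachable T l {0, v} := by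
    intro v hv
    induction hv using Submodule.closure_induction with
    | zero => simpa only [pair_eq_singleton] using IsReachable.zero
    | add v w _ _ hv hw =>
      refine (hv.add hw).mono (insert_subset ?_ (singleton_subset_iff.2 ?_))
      · exact ⟨0, mem_insert _ _, 0, mem_insert _ _, add_zero 0⟩
      · exact add_mem_add (mem_insert_of_mem _ rfl) (mem_insert_of_mem _ rfl)
    | smul_mem c e he => exact isReachable_of_mem_clusterVectors (smul_mem_clusterVectors he c)
  refine .of_forall_exists fun ε hε => ?_
  obtain ⟨v, hvu, hv⟩ := Metric.dense_iff.1 hl u ε hε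
  refine ⟨{0, v}, hspan v hv, ?_⟩
  rintro w (rfl | rfl)
  · exact ⟨0, mem_insert _ _, by simpa using hε.le⟩
  · exact ⟨v, mem_insert_of_mem _ rfl, (mem_ball_iff_norm.1 hvu).le⟩

lemma isReachable_of_finite (hl : Dense (Submodule.span ℂ (clusterVectors T l) : Set X))
    {K : Set X} (hK : K.Finite) : IsReachable T l K := by
  suffices h : IsReachable T l (insert 0 K) from h.mono (subset_insert 0 K)
  induction K, hK using Set.Finite.induction_on with
  | empty => simpa using IsReachable.zero
  | @insert u K _ _ ih =>
    refine ((isReachable_zero_pair hl u).add ih).mono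
      (insert_subset ?_ (insert_subset ?_ fun v hv => ?_))
    · exact ⟨0, mem_insert _ _, 0, mem_insert _ _, add_zero 0⟩
    · exact ⟨u, mem_insert_of_mem _ rfl, 0, mem_insert _ _, add_zero _⟩
    · exact ⟨0, mem_insert _ _, v, mem_insert_of_mem _ hv, zero_add v⟩

lemma isReachable_of_isCompact (hl : Dense (Submodule.span ℂ (clusterVectors T l) : Set X))
    {K : Set X} (hK : IsCompact K) : IsReachable T l K := by
  refine .of_forall_exists fun ε hε => ?_
  obtain ⟨L, -, hL, hKL⟩ := hK.finite_cover_balls hε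
  refine ⟨L, isReachable_of_finite hl hL, fun u hu => ?_⟩
  obtain ⟨v, hv, huv⟩ := mem_iUnion₂.1 (hKL hu)
  exact ⟨v, hv, (mem_ball_iff_norm'.1 huv).le⟩

/- Near `v`, the perturbed sum takes a value at a point `t` that agrees with `z` in all coordinates
below `k`; by independence, some iterate of `l` moves `z` close to `t`. -/
lemma exists_perturbation {k : ℕ} (hlk : IsIndependentFrom k l)
    (hl : Dense (Submodule.span ℂ (clusterVectors T l) : Set X)) {x : ℕ →₀ X}
    (hx : x ∈ eigenfamilies T l) {V : Set X} (hV : IsOpen V) (hV_nonempty : V.Nonempty) {δ : ℝ}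
    (hδ : 0 < δ) : ∃ y ∈ eigenfamilies T l, ∫ z, ‖randomSum y z‖ ∂torusHaar ≤ δ ∧
      ∀ z, ∃ n : ℕ, T^[n] (randomSum (x + y) z) ∈ V := by
  obtain ⟨v, hv⟩ := hV_nonempty
  obtain ⟨ε, hε, hεV⟩ := Metric.isOpen_iff.1 hV v hv
  obtain ⟨M, hkM, hx_tail⟩ := exists_forall_ge_eq_zero x k
  have hK : IsCompact (range fun z => v - randomSum x z) := isCompact_range (by fun_prop)
  obtain ⟨y, hy, hy_zero, hy_mean, hy_reach⟩ :=
    isReachable_of_isCompact hl hK M (min δ (ε / 2)) (lt_min hδ (half_pos hε))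
  refine ⟨y, hy, hy_mean.trans (min_le_left _ _), fun z => ?_⟩
  obtain ⟨s, hs⟩ := hy_reach _ (mem_range_self z)
  obtain ⟨t, htz, htx, hty⟩ := exists_glue hx_tail hy_zero z s
  have ht : randomSum (x + y) t ∈ V := hεV <| mem_ball_iff_norm.2 <| by
    rw [map_add, ContinuousMap.add_apply, htx, hty, add_comm, ← sub_sub_eq_add_sub]
    exact hs.trans_lt ((min_le_right _ _).trans_lt (half_lt_self hε))
  have hopen : IsOpen {w | randomSum (x + y) (w * z) ∈ V} :=
    hV.preimage ((randomSum (x + y)).continuous.comp (continuous_mul_const z))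
  have hmem : t / z ∈ closure (range fun n : ℕ => l ^ n) := hlk.mem_closure_range_pow fun j hj => by
    rw [Pi.div_apply, htz j (hj.trans_le hkM), div_self']
  obtain ⟨_, hw, n, rfl⟩ := mem_closure_iff.1 hmem _ hopen (by simpa using ht)
  exact ⟨n, (iterate_randomSum (add_mem hx hy) z n).symm ▸ hw⟩

end Reachable

section ProbabilityMeasure

variable {X : Type*} [TopologicalSpace X] [MeasurableSpace X] [OpensMeasurableSpace X]

lemma isOpen_setOf_lt_measure [HasOuterApproxClosed X] {O : Set X} (hO : IsOpen O)
    (c : ENNReal) : IsOpen {m : ProbabilityMeasure X | c < (m : Measure X) O} :=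
  isOpen_iff_mem_nhds.2 fun _ hm => eventually_lt_of_lt_liminf <|
    lt_of_lt_of_le hm (ProbabilityMeasure.le_liminf_measure_open_of_tendsto tendsto_id hO)

lemma measure_biInter_eq_one_iff {m : Measure X} [IsProbabilityMeasure m] {S : Set (Set X)}
    (hS : S.Countable) (hopen : ∀ O ∈ S, IsOpen O) :
    m (⋂ O ∈ S, O) = 1 ↔ ∀ O ∈ S, m O = 1 := by
  have hmem : ∀ {A}, MeasurableSet A → (m A = 1 ↔ A ∈ ae m) := fun hA =>
    (mem_ae_iff_prob_eq_one hA).symm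
  rw [hmem (.biInter hS fun O hO => (hopen O hO).measurableSet), countable_bInter_mem hS]
  exact forall₂_congr fun O hO => (hmem (hopen O hO).measurableSet).symm

lemma isGδ_setOf_measure_eq_one [HasOuterApproxClosed X] {A : Set X} (hA : IsGδ A) :
    IsGδ {m : ProbabilityMeasure X | (m : Measure X) A = 1} := by
  obtain ⟨S, hopen, hS, rfl⟩ := hA
  obtain ⟨u, -, hu_lt, hu⟩ := exists_seq_strictMono_tendsto' (zero_lt_one (α := ENNReal))
  have heq : {m : ProbabilityMeasure X | (m : Measure X) (⋂₀ S) = 1} =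
      ⋂ O ∈ S, ⋂ i, {m : ProbabilityMeasure X | u i < (m : Measure X) O} := by
    ext m
    simp only [sInter_eq_biInter, mem_ofPred_eq, measure_biInter_eq_one_iff hS hopen, mem_iInter]
    refine forall₂_congr fun O _ => ⟨fun h i => h ▸ (hu_lt i).2, fun h => ?_⟩
    exact le_antisymm prob_le_one (le_of_tendsto' hu fun i => (h i).le)
  rw [heq]
  exact .biInter hS fun O hO => .iInter fun i => (isOpen_setOf_lt_measure (hopen O hO) (u i)).isGδ

end ProbabilityMeasure

section Hypercyclic

variable {X : Type*} [TopologicalSpace X]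

/-- The set `HC(f)` of points with a dense orbit under `f`. -/
def hypercyclicVectors (f : X → X) : Set X := {x | Dense (range fun n : ℕ => f^[n] x)}

/-- The points whose orbit under `f` visits `U`. -/
def visitors (f : X → X) (U : Set X) : Set X := ⋃ n : ℕ, f^[n] ⁻¹' U

lemma isOpen_visitors {f : X → X} (hf : Continuous f) {U : Set X} (hU : IsOpen U) :
    IsOpen (visitors f U) :=
  isOpen_iUnion fun n => hU.preimage (hf.iterate n)

lemma hypercyclicVectors_subset_visitors (f : X → X) {U : Set X} (hU : IsOpen U)
    (hU_nonempty : U.Nonempty) : hypercyclicVectors f ⊆ visitors f U := fun x hx => by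
  obtain ⟨_, hxU, n, rfl⟩ := Dense.inter_open_nonempty hx U hU hU_nonempty
  exact mem_iUnion.2 ⟨n, hxU⟩

lemma hypercyclicVectors_eq_biInter [SecondCountableTopology X] (f : X → X) :
    hypercyclicVectors f = ⋂ U ∈ visitors f '' countableBasis X, U := by
  rw [biInter_image]
  refine Subset.antisymm (subset_iInter₂ fun b hb => hypercyclicVectors_subset_visitors f
    (isOpen_of_mem_countableBasis hb) (nonempty_of_mem_countableBasis hb)) fun x hx => ?_
  refine (isBasis_countableBasis X).dense_iff.2 fun b hb _ => ?_
  obtain ⟨n, hn⟩ := mem_iUnion.1 (mem_iInter₂.1 hx b hb)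
  exact ⟨f^[n] x, hn, n, rfl⟩

lemma isGδ_hypercyclicVectors [SecondCountableTopology X] {f : X → X} (hf : Continuous f) :
    IsGδ (hypercyclicVectors f) := by
  rw [hypercyclicVectors_eq_biInter, biInter_image]
  exact .biInter (countable_countableBasis X) fun b hb =>
    (isOpen_visitors hf (isOpen_of_mem_countableBasis hb)).isGδ

lemma measure_hypercyclicVectors_eq_one_iff [SecondCountableTopology X] [MeasurableSpace X]
    [OpensMeasurableSpace X] {f : X → X} (hf : Continuous f) {m : Measure X}
    [IsProbabilityMeasure m] :
    m (hypercyclicVectors f) = 1 ↔ ∀ b ∈ countableBasis X, m (visitors f b) = 1 := by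
  rw [hypercyclicVectors_eq_biInter, measure_biInter_eq_one_iff
    ((countable_countableBasis X).image _), forall_mem_image]
  exact forall_mem_image.2 fun b hb => isOpen_visitors hf (isOpen_of_mem_countableBasis hb)

lemma measure_pos_of_measurePreserving_of_hypercyclicVectors [MeasurableSpace X]
    [OpensMeasurableSpace X] {f : X → X}
    {μ : Measure X} (hf : MeasurePreserving f μ μ) (hμ : μ (hypercyclicVectors f) ≠ 0) {U : Set X}
    (hU : IsOpen U) (hU_nonempty : U.Nonempty) : 0 < μ U := by
  refine pos_iff_ne_zero.2 fun hU_zero => hμ ?_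
  refine measure_mono_null (hypercyclicVectors_subset_visitors f hU hU_nonempty) ?_
  refine measure_iUnion_null fun n => ?_
  rw [(hf.iterate n).measure_preimage hU.measurableSet.nullMeasurableSet, hU_zero]

end Hypercyclic

lemma ergodic_map_of_ae_semiconj {Ω X : Type*} [MeasurableSpace Ω] [MeasurableSpace X]
    {P : Measure Ω} {g : Ω → Ω} {f : X → X} {ξ : Ω → X} (hg : Ergodic g P) (hf : Measurable f)
    (hξ : Measurable ξ) (hfg : ∀ᵐ ω ∂P, f (ξ ω) = ξ (g ω)) : Ergodic f (P.map ξ) := by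
  refine ⟨⟨hf, ?_⟩, ⟨fun s hs hfs => ?_⟩⟩
  · calc (P.map ξ).map f = P.map (ξ ∘ g) := by
          rw [Measure.map_map hf hξ]
          exact Measure.map_congr hfg
      _ = P.map ξ := by rw [← Measure.map_map hξ hg.measurable, hg.toMeasurePreserving.map_eq]
  · have hpre : g ⁻¹' (ξ ⁻¹' s) =ᵐ[P] ξ ⁻¹' s := by
      filter_upwards [hfg] with ω hω
      exact (congrArg (· ∈ s) hω.symm).trans (congrArg (ξ ω ∈ ·) hfs)
    rw [eventuallyConst_set]
    exact (hg.quasiErgodic.ae_mem_or_ae_notMem₀ (hξ hs).nullMeasurableSet hpre).imp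
      (ae_map_iff hξ.aemeasurable hs).2 (ae_map_iff hξ.aemeasurable hs.compl).2

section Law

variable {Ω X : Type*} [MeasurableSpace Ω] {P : Measure Ω} [IsProbabilityMeasure P]
  [NormedAddCommGroup X] [MeasurableSpace X] [BorelSpace X] {p : ENNReal}

/-- The distribution of a `p`-integrable random vector. -/
noncomputable def law (ξ : Lp X p P) : ProbabilityMeasure X :=
  ⟨P.map ξ, Measure.isProbabilityMeasure_map (Lp.aestronglyMeasurable ξ).aemeasurable⟩

lemma coe_law_eq_map {ξ : Lp X p P} {f : Ω → X} (h : ξ =ᵐ[P] f) : (law ξ : Measure X) = P.map f :=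
  Measure.map_congr h

lemma continuous_law [Fact (1 ≤ p)] : Continuous (law : Lp X p P → ProbabilityMeasure X) :=
  continuous_iff_continuousAt.2 fun _ =>
    ((tendstoInMeasure_of_tendsto_Lp tendsto_id).tendstoInDistribution fun ξ : Lp X p P =>
      (Lp.aestronglyMeasurable ξ).aemeasurable).tendsto

end Law

section Steinhaus

variable {X : Type*} [NormedAddCommGroup X] [NormedSpace ℂ X]

/-- The random vector `randomSum x`, as an element of `L¹` of the torus. -/
noncomputable def randomSumLp : (ℕ →₀ X) →ₗ[ℂ] Lp X 1 torusHaar :=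
  (ContinuousMap.toLp 1 torusHaar ℂ).toLinearMap ∘ₗ randomSum

lemma coeFn_randomSumLp (x : ℕ →₀ X) : randomSumLp x =ᵐ[torusHaar] randomSum x :=
  ContinuousMap.coeFn_toLp torusHaar _

lemma norm_randomSumLp (x : ℕ →₀ X) : ‖randomSumLp x‖ = ∫ z, ‖randomSum x z‖ ∂torusHaar := by
  rw [L1.norm_eq_integral_norm]
  exact integral_congr_ae ((coeFn_randomSumLp x).fun_comp norm)

/-- The random vectors on the torus that are `L¹`-limits of sums `∑ j, z j • x j` in which `x j` is
zero or an eigenvector of `T` for the eigenvalue `l j`. -/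
noncomputable def steinhausSpace (T : X →L[ℂ] X) (l : ℕ → Circle) :
    Submodule ℂ (Lp X 1 torusHaar) :=
  ((eigenfamilies T l).map randomSumLp).topologicalClosure

variable {T : X →L[ℂ] X} {l : ℕ → Circle}

lemma randomSumLp_mem_steinhausSpace {x : ℕ →₀ X} (hx : x ∈ eigenfamilies T l) :
    randomSumLp x ∈ steinhausSpace T l :=
  Submodule.le_topologicalClosure _ (Submodule.mem_map_of_mem hx)

lemma ae_map_eq_of_mem_steinhausSpace {ξ : Lp X 1 torusHaar} (hξ : ξ ∈ steinhausSpace T l) :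
    ∀ᵐ z ∂torusHaar, T (ξ z) = ξ (l * z) := by
  have hl := measurePreserving_mul_left torusHaar l
  let S := Lp.compMeasurePreservingₗᵢ (E := X) (p := 1) ℂ (l * ·) hl
  have hS : ∀ ξ, S ξ =ᵐ[torusHaar] fun z => ξ (l * z) := fun ξ =>
    Lp.coeFn_compMeasurePreserving ξ hl
  suffices T.compLpL 1 torusHaar ξ = S ξ by
    filter_upwards [T.coeFn_compLpL ξ, hS ξ] with z hT hSz
    rw [← hT, this, hSz]
  refine closure_minimal (t := {ξ | T.compLpL 1 torusHaar ξ = S ξ}) ?_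
    (isClosed_eq (ContinuousLinearMap.continuous _) S.continuous) hξ
  rintro _ ⟨x, hx, rfl⟩
  refine Lp.ext ?_
  filter_upwards [T.coeFn_compLpL (randomSumLp x), hS (randomSumLp x), coeFn_randomSumLp x,
    hl.quasiMeasurePreserving.ae (coeFn_randomSumLp x)] with z hT hSz hx_z hx_lz
  rw [hT, hSz, hx_z, hx_lz, map_randomSum hx]

variable [MeasurableSpace X] [BorelSpace X]

lemma coe_law_randomSumLp (x : ℕ →₀ X) :
    (law (randomSumLp x) : Measure X) = torusHaar.map (randomSum x) :=
  coe_law_eq_map (coeFn_randomSumLp x)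

lemma coe_law_randomSumLp_sum_single {k : ℕ} {σ : Fin k → ℕ} (hσ : Function.Injective σ)
    (v : Fin k → X) : (law (randomSumLp (∑ i, Finsupp.single (σ i) (v i))) : Measure X) =
      Measure.map (fun z : Fin k → Circle => ∑ i, (z i : ℂ) • v i)
        (Measure.pi fun _ => haarCircle) := by
  have hv : Continuous fun z : Fin k → Circle => ∑ i, (z i : ℂ) • v i := by fun_prop
  have hmp := measurePreserving_comp_torusHaar hσ
  rw [coe_law_randomSumLp, ← hmp.map_eq, Measure.map_map hv.measurable hmp.measurable]
  congr 1 with z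
  simp [randomSum_single]

lemma law_randomSumLp_mem_steinhausFamily {x : ℕ →₀ X} (hx : x ∈ eigenfamilies T l) :
    law (randomSumLp x) ∈ SteinhausFamily T := by
  let σ := x.support.orderEmbOfFin rfl
  have hx_sum : x = ∑ i, Finsupp.single (σ i) (x (σ i)) := by
    conv_lhs => rw [← x.sum_single, Finsupp.sum, ← x.support.map_orderEmbOfFin_univ rfl]
    exact Finset.sum_map _ _ _
  refine ⟨_, fun i => x (σ i), fun i => l (σ i), fun i => ⟨?_, Circle.norm_coe _, ?_⟩, ?_⟩
  · exact Finsupp.mem_support_iff.1 (x.support.orderEmbOfFin_mem rfl i)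
  · exact mem_eigenfamilies.1 hx (σ i)
  · conv_lhs => rw [hx_sum]
    exact coe_law_randomSumLp_sum_single σ.injective _

lemma law_mem_closure_steinhausFamily {ξ : Lp X 1 torusHaar} (hξ : ξ ∈ steinhausSpace T l) :
    law ξ ∈ closure (SteinhausFamily T) := by
  refine map_mem_closure continuous_law hξ ?_
  rintro _ ⟨x, hx, rfl⟩
  exact law_randomSumLp_mem_steinhausFamily hx

lemma exists_law_randomSumLp_eq {μ : ProbabilityMeasure X} (hμ : μ ∈ SteinhausFamily T) :
    ∃ (k : ℕ) (l₀ : ℕ → Circle) (x : ℕ →₀ X), law (randomSumLp x) = μ ∧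
      ∀ l : ℕ → Circle, (∀ j < k, l j = l₀ j) → x ∈ eigenfamilies T l := by
  obtain ⟨k, v, c, hv, hμ⟩ := hμ
  let c' : Fin k → Circle := fun i => ⟨c i, mem_sphere_zero_iff_norm.2 (hv i).2.1⟩
  refine ⟨k, fun j => if h : j < k then c' ⟨j, h⟩ else 1,
    ∑ i : Fin k, Finsupp.single (i : ℕ) (v i), Subtype.ext ?_, fun l hl => ?_⟩
  · exact (coe_law_randomSumLp_sum_single Fin.val_injective v).trans hμ.symm
  · refine sum_mem fun i _ => single_mem_eigenfamilies ?_
    have hli : l i = c' i := (hl i i.2).trans (dif_pos i.2)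
    exact hli ▸ (hv i).2.2

variable {k : ℕ}

lemma dense_setOf_law_visitors (hlk : IsIndependentFrom k l)
    (hl : Dense (Submodule.span ℂ (clusterVectors T l) : Set X)) {U : Set X} (hU : IsOpen U)
    (hU_nonempty : U.Nonempty) :
    Dense {ξ : steinhausSpace T l | (law ξ.1 : Measure X) (visitors T U) = 1} := by
  refine Metric.dense_iff.2 fun ξ ε hε => ?_
  obtain ⟨_, ⟨x, hx, rfl⟩, hξx⟩ := Metric.mem_closure_iff.1 ξ.2 (ε / 2) (half_pos hε)
  obtain ⟨y, hy, hy_mean, hy_visit⟩ :=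
    exists_perturbation hlk hl hx hU hU_nonempty (half_pos hε)
  refine ⟨⟨_, randomSumLp_mem_steinhausSpace (add_mem hx hy)⟩, ?_, ?_⟩
  · calc dist (randomSumLp (x + y)) ξ
        ≤ dist (randomSumLp (x + y)) (randomSumLp x) + dist (randomSumLp x) ξ := dist_triangle _ _ _
      _ = ‖randomSumLp y‖ + dist ξ.1 (randomSumLp x) := by
        rw [map_add, dist_self_add_left, dist_comm]
      _ < ε / 2 + ε / 2 := add_lt_add_of_le_of_lt ((norm_randomSumLp y).trans_le hy_mean) hξx
      _ = ε := add_halves ε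
  · have hpre : randomSum (x + y) ⁻¹' visitors T U = univ :=
      eq_univ_of_forall fun z => mem_iUnion.2 (hy_visit z)
    rw [mem_ofPred_eq, coe_law_randomSumLp, Measure.map_apply
      (randomSum (x + y)).continuous.measurable (isOpen_visitors T.continuous hU).measurableSet,
      hpre, measure_univ]

variable [CompleteSpace X] [SecondCountableTopology X]

lemma dense_setOf_law_hypercyclicVectors (hlk : IsIndependentFrom k l)
    (hl : Dense (Submodule.span ℂ (clusterVectors T l) : Set X)) :
    Dense {ξ : steinhausSpace T l | (law ξ.1 : Measure X) (hypercyclicVectors T) = 1} := by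
  have : CompleteSpace (steinhausSpace T l) :=
    (Submodule.isClosed_topologicalClosure _).completeSpace_coe
  simp only [measure_hypercyclicVectors_eq_one_iff T.continuous, ofPred_forall]
  refine dense_biInter_of_Gδ (fun b hb => ?_) (countable_countableBasis X) fun b hb =>
    dense_setOf_law_visitors hlk hl (isOpen_of_mem_countableBasis hb)
      (nonempty_of_mem_countableBasis hb)
  exact (isGδ_setOf_measure_eq_one (isOpen_visitors T.continuous
    (isOpen_of_mem_countableBasis hb)).isGδ).preimage (continuous_law.comp continuous_subtype_val)

lemma HasPerfectSpanningEigenvectors.dense_setOf_hypercyclicVectors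
    (hT : HasPerfectSpanningEigenvectors T) :
    Dense {m : closure (SteinhausFamily T) | (m.1 : Measure X) (hypercyclicVectors T) = 1} := by
  refine Subtype.dense_iff.2 (closure_minimal (fun μ hμ => ?_) isClosed_closure)
  obtain ⟨k, l₀, x, rfl, hx⟩ := exists_law_randomSumLp_eq hμ
  obtain ⟨l, hl₀, hlk, hl⟩ := hT.exists_isIndependentFrom_dense_span k l₀
  have hx_closure := dense_setOf_law_hypercyclicVectors hlk hl
    ⟨_, randomSumLp_mem_steinhausSpace (hx l hl₀)⟩
  exact map_mem_closure (f := fun ξ : steinhausSpace T l => law ξ.1)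
    (continuous_law.comp continuous_subtype_val) hx_closure fun ξ hξ =>
      ⟨⟨_, law_mem_closure_steinhausFamily ξ.2⟩, hξ, rfl⟩

lemma HasPerfectSpanningEigenvectors.exists_ergodic (hT : HasPerfectSpanningEigenvectors T) :
    ∃ μ : ProbabilityMeasure X, Ergodic T (μ : Measure X) ∧
      (μ : Measure X) (hypercyclicVectors T) = 1 := by
  obtain ⟨l, -, hl_indep, hl⟩ := hT.exists_isIndependentFrom_dense_span 0 1
  obtain ⟨ξ, hξ⟩ := (dense_setOf_law_hypercyclicVectors hl_indep hl).nonempty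
  exact ⟨law ξ.1, ergodic_map_of_ae_semiconj
    (ergodic_mul_left_of_denseRange_pow hl_indep.denseRange_pow torusHaar)
    T.continuous.measurable (Lp.stronglyMeasurable ξ.1).measurable
    (ae_map_eq_of_mem_steinhausSpace ξ.2), hξ⟩

end Steinhaus

/-- Let `T` be a bounded linear operator on a complex separable
Banach space `X` with a perfectly spanning set of unimodular eigenvectors. Then
`S̄_T(HC(T))` is a dense `G_δ` subset of `S̄_T(X)`; in particular, `T` admits an
ergodic invariant Borel probability measure with full support. -/
theorem stmt19 {X : Type*} [NormedAddCommGroup X] [NormedSpace ℂ X] [CompleteSpace X]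
    [TopologicalSpace.SeparableSpace X] [MeasurableSpace X] [BorelSpace X]
    (T : X →L[ℂ] X)
    (hspan : ∀ D : Set ℂ, D.Countable →
      Dense (↑(Submodule.span ℂ {x : X | ∃ l : ℂ, ‖l‖ = 1 ∧ l ∉ D ∧ T x = l • x}) :
        Set X)) :
    (IsGδ {m : ↥(closure (SteinhausFamily (⇑T))) |
        (↑m.1 : Measure X) {x : X | Dense (Set.range fun n : ℕ => (⇑T)^[n] x)} = 1} ∧
      Dense {m : ↥(closure (SteinhausFamily (⇑T))) |
        (↑m.1 : Measure X) {x : X | Dense (Set.range fun n : ℕ => (⇑T)^[n] x)} = 1}) ∧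
    ∃ μ : Measure X, IsProbabilityMeasure μ ∧ Ergodic (⇑T) μ ∧
      ∀ U : Set X, IsOpen U → U.Nonempty → 0 < μ U := by
  have : SecondCountableTopology X := UniformSpace.secondCountable_of_separable X
  have hT : HasPerfectSpanningEigenvectors T := hspan
  refine ⟨⟨?_, hT.dense_setOf_hypercyclicVectors⟩, ?_⟩
  · exact (isGδ_setOf_measure_eq_one (isGδ_hypercyclicVectors T.continuous)).preimage
      continuous_subtype_val
  · obtain ⟨μ, hμ, hμ_hc⟩ := hT.exists_ergodic
    exact ⟨μ, inferInstance, hμ, fun U hU hU_nonempty =>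
      measure_pos_of_measurePreserving_of_hypercyclicVectors hμ.toMeasurePreserving
        (hμ_hc.trans_ne one_ne_zero) hU hU_nonempty⟩
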